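/- Let B be the coordinate ring of {x₁^{m₁}⋯xₙ^{mₙ} z = Q(x,y)} with Q monic in y of degree r ≥ 2 and all mᵢ ≥ 2. Then for every nonzero locally nilpotent ℂ-derivation ∂ of B, Ker(∂²) ⊆ ℂ[x₁,…,xₙ, y] (the image of the polynomial subring in x₁,…,xₙ,y in B). -/

import Mathlib

open MvPolynomial

set_option synthInstance.maxHeartbeats 1000000
set_option maxHeartbeats 1000000

/-!
Solving for `z` turns the elements of `B` into Laurent polynomials in `x` and `y`. Order exponents
lexicographically, `y` first. Since `z` leads with `y ^ r / x ^ m`, the leading exponents of `B`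
form the semigroup generated by those of the `x i`, `y` and `z`. The derivation `D` extends to
`y ^ a * x ^ b ↦ y ^ a * x ^ b * w (a, b)` with `w` additive, and the largest exponent `e` occurring
in `w` gives it a leading part, which shifts exponents by `e` and has additive coefficients. Local
nilpotency makes these coefficients proportional to an integral weight `M` with `M e = -1`, such
that `M s` is nonnegative on the semigroup and less than the nilpotency order of any element leading
at `s`. As all `m i ≥ 2`, the only such weight is the degree in `y`. Hence `D (D b) = 0` forces the
leading `y`-degree of `b` to be at most `1 < r`, so the normal form of `b` does not involve `z`.
-/

namespace Danielewski

open AddMonoidAlgebra Finset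

/-! ### Leading exponents in the algebra of an ordered group -/

section LeadingExponent

variable {K G : Type*} [CommRing K] [LinearOrder G]

variable (K) in
/-- The elements of the group algebra all of whose exponents are at most `s`. -/
noncomputable def exponentsLE (s : G) : Submodule K K[G] := supported K K (Set.Iic s)

/-- `s` is the greatest exponent that occurs in the group algebra element `p`. -/
def IsLeadingExponent (p : K[G]) (s : G) : Prop :=
  p ∈ exponentsLE K s ∧ p.coeff s ≠ 0

lemma mem_exponentsLE {p : K[G]} {s : G} :
    p ∈ exponentsLE K s ↔ ∀ u, s < u → p.coeff u = 0 := by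
  simp [exponentsLE, mem_supported']

lemma exponentsLE_mono {s t : G} (hst : s ≤ t) : exponentsLE K s ≤ exponentsLE K t :=
  supported_mono (Set.Iic_subset_Iic.2 hst)

lemma isLeadingExponent_single (s : G) {a : K} (ha : a ≠ 0) :
    IsLeadingExponent (single s a) s :=
  ⟨mem_exponentsLE.2 fun u hu ↦ by simp [hu.ne], by simpa using ha⟩

lemma IsLeadingExponent.ne_zero {p : K[G]} {s : G} (hp : IsLeadingExponent p s) : p ≠ 0 := by
  rintro rfl
  exact hp.2 rfl

lemma IsLeadingExponent.le {p : K[G]} {s t : G} (hs : IsLeadingExponent p s)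
    (ht : p ∈ exponentsLE K t) : s ≤ t :=
  not_lt.1 fun h ↦ hs.2 (mem_exponentsLE.1 ht s h)

lemma IsLeadingExponent.unique {p : K[G]} {s t : G} (hs : IsLeadingExponent p s)
    (ht : IsLeadingExponent p t) : s = t :=
  (hs.le ht.1).antisymm (ht.le hs.1)

lemma exists_isLeadingExponent {p : K[G]} (hp : p ≠ 0) : ∃ s, IsLeadingExponent p s := by
  have hne : p.coeff.support.Nonempty := by simpa using hp
  obtain ⟨hmem, hmax⟩ := p.coeff.support.isGreatest_max' hne
  exact ⟨_, mem_supported.2 hmax, Finsupp.mem_support_iff.1 hmem⟩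

lemma isLeadingExponent_sum {ι : Type*} {T : Finset ι} {f : ι → K[G]} {i : ι} {s : G}
    (hi : i ∈ T) (hfi : IsLeadingExponent (f i) s)
    (hf : ∀ j ∈ T, j ≠ i → ∃ t < s, f j ∈ exponentsLE K t) :
    IsLeadingExponent (∑ j ∈ T, f j) s := by
  refine ⟨sum_mem fun j hj ↦ ?_, ?_⟩
  · obtain rfl | hji := eq_or_ne j i
    · exact hfi.1
    · obtain ⟨t, hts, ht⟩ := hf j hj hji
      exact exponentsLE_mono hts.le ht
  · rw [AddMonoidAlgebra.coeff_sum, Finsupp.finsetSum_apply, sum_eq_single_of_mem i hi]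
    · exact hfi.2
    · intro j hj hji
      obtain ⟨t, hts, ht⟩ := hf j hj hji
      exact mem_exponentsLE.1 ht s hts

variable [AddCommGroup G]

omit [LinearOrder G] in
lemma mul_eq_sum_single_mul (p q : K[G]) :
    p * q = p.coeff.sum fun v a ↦ single v a * q := by
  conv_lhs => rw [← sum_coeff_single p, Finsupp.sum_mul]

variable [IsOrderedAddMonoid G]

lemma coeff_sum_single_mul {p : K[G]} {q : G → K[G]} {s e u : G} (hp : p ∈ exponentsLE K s)
    (hq : ∀ v, q v ∈ exponentsLE K e) (hu : s + e ≤ u) :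
    (p.coeff.sum fun v a ↦ single v a * q v).coeff u = p.coeff s * (q s).coeff (-s + u) := by
  rw [coeff_finsuppSum, Finsupp.sum_apply, Finsupp.sum_eq_single s]
  · rw [coeff_single_mul_apply]
  · intro v hv hvs
    have hlt : v < s := (not_lt.1 fun h ↦ hv (mem_exponentsLE.1 hp v h)).lt_of_ne hvs
    have hvu : v + e < u := (add_lt_add_left hlt e).trans_le hu
    rw [coeff_single_mul_apply, mem_exponentsLE.1 (hq v) _ (lt_neg_add_iff_add_lt.2 hvu),
      mul_zero]
  · simp

lemma sum_single_mul_mem_exponentsLE {p : K[G]} {q : G → K[G]} {s e : G}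
    (hp : p ∈ exponentsLE K s) (hq : ∀ v, q v ∈ exponentsLE K e) :
    (p.coeff.sum fun v a ↦ single v a * q v) ∈ exponentsLE K (s + e) :=
  mem_exponentsLE.2 fun u hu ↦ by
    rw [coeff_sum_single_mul hp hq hu.le,
      mem_exponentsLE.1 (hq s) _ (lt_neg_add_iff_add_lt.2 hu), mul_zero]

lemma mul_mem_exponentsLE {p q : K[G]} {s t : G} (hp : p ∈ exponentsLE K s)
    (hq : q ∈ exponentsLE K t) : p * q ∈ exponentsLE K (s + t) :=
  mul_eq_sum_single_mul p q ▸ sum_single_mul_mem_exponentsLE hp fun _ ↦ hq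

lemma IsLeadingExponent.mul [NoZeroDivisors K] {p q : K[G]} {s t : G}
    (hp : IsLeadingExponent p s) (hq : IsLeadingExponent q t) :
    IsLeadingExponent (p * q) (s + t) := by
  refine ⟨mul_mem_exponentsLE hp.1 hq.1, ?_⟩
  rw [mul_eq_sum_single_mul, coeff_sum_single_mul hp.1 (fun _ ↦ hq.1) le_rfl, neg_add_cancel_left]
  exact mul_ne_zero hp.2 hq.2

lemma IsLeadingExponent.pow [IsDomain K] {p : K[G]} {s : G} (hp : IsLeadingExponent p s) :
    ∀ k : ℕ, IsLeadingExponent (p ^ k) (k • s)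
  | 0 => by
    rw [pow_zero, zero_nsmul, AddMonoidAlgebra.one_def]
    exact isLeadingExponent_single 0 one_ne_zero
  | k + 1 => by simpa only [pow_succ, succ_nsmul] using (hp.pow k).mul hp

end LeadingExponent

/-! ### Logarithmic derivations -/

section LogDerivation

variable {K G : Type*} [CommRing K] [AddCommMonoid G]

/-- The derivation of `K[G]` that multiplies the monomial with exponent `v` by `w v`, so that
`w` is its logarithmic differential. -/
noncomputable def logDerivation (w : G →+ K[G]) : Derivation K K[G] K[G] :=
  Derivation.mk'
    (Finsupp.linearCombination K (fun v ↦ single v (1 : K) * w v) ∘ₗ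
      (coeffLinearEquiv K).toLinearMap) fun p q ↦ by
    have leibniz_single (v v' : G) (a a' : K) :
        (a * a') • (single (v + v') (1 : K) * (w v + w v')) =
          single v a * (a' • (single v' 1 * w v')) + single v' a' * (a • (single v 1 * w v)) := by
      have hv : single (v + v') (a * a') = single v a * single v' a' :=
        (single_mul_single ..).symm
      simp only [← smul_mul_assoc, smul_single, smul_eq_mul, mul_one, hv]
      ring
    induction p using AddMonoidAlgebra.induction_linear with
    | zero => simp
    | add f g hf hg => rw [add_mul, map_add, hf, hg, map_add]; simp only [smul_eq_mul]; ring
    | single v a =>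
      induction q using AddMonoidAlgebra.induction_linear with
      | zero => simp
      | add f g hf hg => rw [mul_add, map_add, hf, hg, map_add]; simp only [smul_eq_mul]; ring
      | single v' a' =>
        rw [single_mul_single]
        simpa [-Finsupp.single_mul] using leibniz_single v v' a a'

lemma logDerivation_apply (w : G →+ K[G]) (p : K[G]) :
    logDerivation w p = p.coeff.sum fun v a ↦ single v a * w v := by
  change Finsupp.linearCombination K (fun v ↦ single v (1 : K) * w v) p.coeff = _
  simp [Finsupp.linearCombination_apply, ← smul_mul_assoc]

lemma logDerivation_single (w : G →+ K[G]) (v : G) (a : K) :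
    logDerivation w (single v a) = single v a * w v := by
  rw [logDerivation_apply, coeff_single, Finsupp.sum_single_index (by simp)]

end LogDerivation

section LocallyNilpotent

variable {K G : Type*} [CommRing K]

/-- The exponent map sending `s` to the coefficient of `w s` at `e`. When `e` is the largest
exponent of the values of `w`, it is the symbol of `logDerivation w`. -/
noncomputable def symbol [AddCommGroup G] (w : G →+ K[G]) (e : G) : G →+ K :=
  (Finsupp.applyAddHom e).comp ((coeffAddEquiv (R := K) (M := G)).toAddMonoidHom.comp w)

@[simp]
lemma symbol_apply [AddCommGroup G] (w : G →+ K[G]) (e s : G) :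
    symbol w e s = (w s).coeff e := rfl

/-- The exponents that lead some element of `A`. -/
def leadingExponents [LinearOrder G] (A : Set K[G]) : Set G :=
  {s | ∃ p ∈ A, IsLeadingExponent p s}

variable [AddCommGroup G] [LinearOrder G]

lemma exists_max_exponent [AddGroup.FG G] {w : G →+ K[G]} (hw : w ≠ 0) :
    ∃ e, symbol w e ≠ 0 ∧ ∀ v, w v ∈ exponentsLE K e := by
  obtain ⟨T, hT, hTfin⟩ := AddGroup.fg_iff.1 ‹AddGroup.FG G›
  have hfin : {e | symbol w e ≠ 0}.Finite := by
    refine (hTfin.biUnion fun t _ ↦ (w t).coeff.hasFiniteSupport).subset fun e he ↦ ?_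
    contrapose! he
    have heq : Set.EqOn (symbol w e) (0 : G →+ K) T := fun t ht ↦ by
      simpa using fun h ↦ he (Set.mem_biUnion ht h)
    simpa using AddMonoidHom.eq_of_eqOn_dense hT heq
  have hne : {e | symbol w e ≠ 0}.Nonempty := by
    by_contra! h
    refine hw (AddMonoidHom.ext fun v ↦ AddMonoidAlgebra.ext (Finsupp.ext fun e ↦ ?_))
    have he : symbol w e = 0 := by simpa using Set.ext_iff.1 h e
    exact DFunLike.congr_fun he v
  obtain ⟨e, he, hmax⟩ := Set.exists_max_image _ id hfin hne
  refine ⟨e, he, fun v ↦ mem_exponentsLE.2 fun u hu ↦ ?_⟩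
  have hu0 : symbol w u = 0 := by
    by_contra h
    exact hu.not_ge (hmax u h)
  exact DFunLike.congr_fun hu0 v

variable [IsOrderedAddMonoid G] {w : G →+ K[G]} {e : G}

lemma logDerivation_mem_exponentsLE (hw : ∀ v, w v ∈ exponentsLE K e) {p : K[G]} {s : G}
    (hp : p ∈ exponentsLE K s) : logDerivation w p ∈ exponentsLE K (s + e) :=
  logDerivation_apply w p ▸ sum_single_mul_mem_exponentsLE hp hw

lemma coeff_logDerivation (hw : ∀ v, w v ∈ exponentsLE K e) {p : K[G]} {s : G}
    (hp : p ∈ exponentsLE K s) :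
    (logDerivation w p).coeff (s + e) = p.coeff s * symbol w e s := by
  rw [logDerivation_apply, coeff_sum_single_mul hp hw le_rfl, neg_add_cancel_left, symbol_apply]

lemma iterate_logDerivation_mem_exponentsLE (hw : ∀ v, w v ∈ exponentsLE K e) {p : K[G]} {s : G}
    (hp : p ∈ exponentsLE K s) :
    ∀ k : ℕ, (logDerivation w)^[k] p ∈ exponentsLE K (s + k • e)
  | 0 => by simpa using hp
  | k + 1 => by
    rw [Function.iterate_succ_apply', succ_nsmul, ← add_assoc]
    exact logDerivation_mem_exponentsLE hw (iterate_logDerivation_mem_exponentsLE hw hp k)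

lemma coeff_iterate_logDerivation (hw : ∀ v, w v ∈ exponentsLE K e) {p : K[G]} {s : G}
    (hp : p ∈ exponentsLE K s) (k : ℕ) :
    ((logDerivation w)^[k] p).coeff (s + k • e) =
      p.coeff s * ∏ i ∈ range k, symbol w e (s + i • e) := by
  induction k with
  | zero => simp
  | succ k ih =>
    rw [Function.iterate_succ_apply', succ_nsmul, ← add_assoc,
      coeff_logDerivation hw (iterate_logDerivation_mem_exponentsLE hw hp k), ih,
      prod_range_succ, mul_assoc]

lemma exists_symbol_eq_zero [IsDomain K] (hw : ∀ v, w v ∈ exponentsLE K e) {p : K[G]} {s : G}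
    (hp : IsLeadingExponent p s) {k : ℕ} (hk : (logDerivation w)^[k] p = 0) :
    ∃ i < k, symbol w e s + i * symbol w e e = 0 := by
  have hprod := coeff_iterate_logDerivation hw hp.1 k
  rw [hk, eq_comm] at hprod
  obtain ⟨i, hi, h⟩ := prod_eq_zero_iff.1 ((mul_eq_zero.1 hprod).resolve_left hp.2)
  exact ⟨i, mem_range.1 hi, by simpa [-symbol_apply] using h⟩

end LocallyNilpotent

lemma exists_integral_weight {K G : Type*} [CommRing K] [IsDomain K] [CharZero K] [AddCommGroup G]
    {l : G →+ K} {e : G} {S : Set G} (hl : l ≠ 0) (hS : AddSubgroup.closure S = ⊤)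
    (h : ∀ s ∈ S, ∃ i : ℕ, l s + i * l e = 0) :
    l e ≠ 0 ∧ ∃ M : G →+ ℤ, ∀ s, l s = -M s * l e := by
  have hle : l e ≠ 0 := fun hle ↦
    hl (AddMonoidHom.eq_of_eqOn_dense hS fun s hs ↦ by simpa [hle] using h s hs)
  have hrange : AddSubgroup.closure S ≤ (AddSubgroup.zmultiples (-l e)).comap l :=
    (AddSubgroup.closure_le _).2 fun s hs ↦ by
      obtain ⟨i, hi⟩ := h s hs
      exact ⟨i, by simp only [natCast_zsmul, nsmul_eq_mul]; linear_combination -hi⟩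
  have hM (s : G) : ∃ k : ℤ, l s = -k * l e := by
    obtain ⟨k, hk⟩ := hrange (hS ▸ AddSubgroup.mem_top s)
    exact ⟨k, by simpa using hk.symm⟩
  choose M hM using hM
  refine ⟨hle, AddMonoidHom.mk' M fun s t ↦ ?_, hM⟩
  have hadd : ((M (s + t) : ℤ) : K) * l e = ((M s + M t : ℤ) : K) * l e := by
    push_cast
    linear_combination hM (s + t) - hM s - hM t - map_add l s t
  exact_mod_cast mul_right_cancel₀ hle hadd

theorem exists_nilpotency_weight {K G : Type*} [CommRing K] [IsDomain K] [CharZero K]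
    [AddCommGroup G] [LinearOrder G] [IsOrderedAddMonoid G] [AddGroup.FG G]
    {w : G →+ K[G]} (hw : w ≠ 0)
    {A : Set K[G]} (hA : Set.MapsTo (logDerivation w) A A)
    (hnil : ∀ p ∈ A, ∃ k, (logDerivation w)^[k] p = 0)
    (hspan : AddSubgroup.closure (leadingExponents A) = ⊤) :
    ∃ (e : G) (M : G →+ ℤ), M e = -1 ∧
      (∀ s ∈ leadingExponents A, M s ≠ 0 → s + e ∈ leadingExponents A) ∧
      ∀ p s k, IsLeadingExponent p s → (logDerivation w)^[k] p = 0 → ∃ i < k, M s = i := by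
  obtain ⟨e, hsymbol, hmax⟩ := exists_max_exponent hw
  obtain ⟨hle, M, hM⟩ : symbol w e e ≠ 0 ∧ ∃ M : G →+ ℤ, ∀ s, symbol w e s = -M s * symbol w e e :=
    exists_integral_weight hsymbol hspan fun s ⟨p, hpA, hp⟩ ↦ by
      obtain ⟨k, hk⟩ := hnil p hpA
      obtain ⟨i, -, hi⟩ := exists_symbol_eq_zero hmax hp hk
      exact ⟨i, hi⟩
  refine ⟨e, M, ?_, ?_, ?_⟩
  · have h : ((M e : ℤ) : K) = ((-1 : ℤ) : K) := by
      push_cast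
      exact mul_right_cancel₀ hle (by linear_combination hM e)
    exact_mod_cast h
  · rintro s ⟨p, hpA, hp⟩ hs
    refine ⟨logDerivation w p, hA hpA, logDerivation_mem_exponentsLE hmax hp.1, ?_⟩
    rw [coeff_logDerivation hmax hp.1, hM]
    exact mul_ne_zero hp.2 (mul_ne_zero (neg_ne_zero.2 (Int.cast_ne_zero.2 hs)) hle)
  · intro p s k hp hk
    obtain ⟨i, hik, hi⟩ := exists_symbol_eq_zero hmax hp hk
    refine ⟨i, hik, ?_⟩
    have h : ((M s : ℤ) : K) = ((i : ℤ) : K) := by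
      push_cast
      refine mul_right_cancel₀ hle ?_
      linear_combination hM s - hi
    exact_mod_cast h

/-! ### The exponent semigroup -/

section Exponent

/-- Exponents `(a, b)` of the Laurent monomials `y ^ a * x ^ b`, ordered lexicographically with
the exponent of `y` first. -/
abbrev Exponent (σ : Type*) : Type _ := ℤ ×ₗ Lex (σ → ℤ)

variable {σ : Type*}

/-- The exponent of `y ^ a * x ^ b`. -/
def mkExponent (a : ℤ) (b : σ → ℤ) : Exponent σ := toLex (a, toLex b)

variable (σ) in
/-- The `y`-component of an exponent. -/
def yCoord : Exponent σ →+ ℤ where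
  toFun s := (ofLex s).1
  map_zero' := rfl
  map_add' _ _ := rfl

/-- The `x i`-component of an exponent. -/
def xCoord (i : σ) : Exponent σ →+ ℤ where
  toFun s := ofLex (ofLex s).2 i
  map_zero' := rfl
  map_add' _ _ := rfl

@[simp]
lemma yCoord_mkExponent (a : ℤ) (b : σ → ℤ) : yCoord σ (mkExponent a b) = a := rfl

@[simp]
lemma xCoord_mkExponent (a : ℤ) (b : σ → ℤ) (i : σ) : xCoord i (mkExponent a b) = b i := rfl

@[ext]
lemma exponent_ext {s t : Exponent σ} (hy : yCoord σ s = yCoord σ t)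
    (hx : ∀ i, xCoord i s = xCoord i t) : s = t :=
  ofLex.injective (Prod.ext hy (ofLex.injective (funext hx)))

variable (σ) in
/-- The exponent of `y`. -/
def yExp : Exponent σ := mkExponent 1 0

open scoped Classical in
/-- The exponent of `x i`. -/
noncomputable def xExp (i : σ) : Exponent σ := mkExponent 0 (Pi.single i 1)

/-- The exponent `(r, -m)` of the leading Laurent monomial `y ^ r / x ^ m` of `z`. -/
def zExp (m : σ → ℕ) (r : ℕ) : Exponent σ := mkExponent r fun i ↦ -m i

/-- The exponents of the monomials `x ^ α * y ^ k * z ^ l` with `α`, `k`, `l` natural, `z` being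
counted as `y ^ r / x ^ m`. -/
def exponentSemigroup (m : σ → ℕ) (r : ℕ) : Set (Exponent σ) :=
  {s | 0 ≤ yCoord σ s ∧ ∀ i, -(m i * (yCoord σ s / r)) ≤ xCoord i s}

section Generators

variable (m : σ → ℕ) {r : ℕ}

lemma yExp_mem_exponentSemigroup (hr : 2 ≤ r) : yExp σ ∈ exponentSemigroup m r := by
  have hdiv : (1 : ℤ) / r = 0 := Int.ediv_eq_zero_of_lt one_pos.le (by exact_mod_cast hr)
  simp [exponentSemigroup, yExp, hdiv]

lemma xExp_mem_exponentSemigroup (r : ℕ) (i : σ) : xExp i ∈ exponentSemigroup m r := by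
  classical
  have hnonneg : (0 : σ → ℤ) ≤ Pi.single i 1 := Pi.single_nonneg.2 one_pos.le
  exact ⟨le_rfl, fun j ↦ by simpa [xExp] using hnonneg j⟩

lemma zExp_mem_exponentSemigroup (hr : r ≠ 0) : zExp m r ∈ exponentSemigroup m r := by
  simp [exponentSemigroup, zExp, hr]

lemma exponent_eq_sum [Fintype σ] (s : Exponent σ) :
    s = yCoord σ s • yExp σ + ∑ i, xCoord i s • xExp i := by
  classical
  ext <;> simp [yExp, xExp, Pi.single_apply, -zsmul_eq_mul]

lemma nsmul_exponent_eq_sum [Fintype σ] (r : ℕ) (s : Exponent σ) :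
    r • s = yCoord σ s • zExp m r +
      ∑ i, (r * xCoord i s + m i * yCoord σ s) • xExp i := by
  classical
  ext
  · simp [zExp, xExp, mul_comm, -zsmul_eq_mul, -nsmul_eq_mul]
  · simp [zExp, xExp, Pi.single_apply, mul_comm, -zsmul_eq_mul, -nsmul_eq_mul]

lemma exists_addMonoidHom_apply [Finite σ] {A : Type*} [AddCommGroup A] (a : A) (c : σ → A) :
    ∃ w : Exponent σ →+ A, w (yExp σ) = a ∧ ∀ i, w (xExp i) = c i := by
  classical
  cases nonempty_fintype σ
  refine ⟨(zmultiplesHom A a).comp (yCoord σ) + ∑ i, (zmultiplesHom A (c i)).comp (xCoord i),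
    by simp [yExp], fun i ↦ ?_⟩
  simp [xExp, Pi.single_apply]

lemma closure_range_exponents [Finite σ] :
    AddSubgroup.closure (insert (yExp σ) (Set.range xExp)) = ⊤ := by
  cases nonempty_fintype σ
  refine eq_top_iff.2 fun s _ ↦ ?_
  rw [exponent_eq_sum s]
  exact add_mem (zsmul_mem (AddSubgroup.subset_closure (.inl rfl)) _)
    (sum_mem fun i _ ↦ zsmul_mem (AddSubgroup.subset_closure (.inr ⟨i, rfl⟩)) _)

lemma closure_exponentSemigroup [Finite σ] (hr : 2 ≤ r) :
    AddSubgroup.closure (exponentSemigroup m r) = ⊤ := by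
  refine top_unique (closure_range_exponents.ge.trans (AddSubgroup.closure_mono ?_))
  rintro _ (rfl | ⟨i, rfl⟩)
  exacts [yExp_mem_exponentSemigroup m hr, xExp_mem_exponentSemigroup m r i]

instance [Finite σ] : AddGroup.FG (Exponent σ) :=
  AddGroup.fg_iff.2 ⟨_, closure_range_exponents, (Set.finite_range xExp).insert _⟩

end Generators

section Monomial

/-- The exponent of the monomial `x ^ α`. -/
def monomialExponent : (σ →₀ ℕ) →+ Exponent σ where
  toFun α := mkExponent 0 fun i ↦ α i
  map_zero' := rfl
  map_add' _ _ := by ext <;> simp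

@[simp]
lemma yCoord_monomialExponent (α : σ →₀ ℕ) : yCoord σ (monomialExponent α) = 0 := rfl

@[simp]
lemma xCoord_monomialExponent (α : σ →₀ ℕ) (i : σ) : xCoord i (monomialExponent α) = α i := rfl

lemma monomialExponent_injective : Function.Injective (monomialExponent (σ := σ)) :=
  fun α β h ↦ Finsupp.ext fun i ↦ by simpa using congrArg (xCoord i) h

lemma monomialExponent_single (i : σ) : monomialExponent (Finsupp.single i 1) = xExp i := by
  classical
  ext <;> simp [xExp, Finsupp.single_apply, Pi.single_apply, eq_comm]

/-- The exponent of `y ^ (k % r) * z ^ (k / r)`. -/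
def normalExponent (m : σ → ℕ) (r k : ℕ) : Exponent σ := (k % r) • yExp σ + (k / r) • zExp m r

@[simp]
lemma yCoord_normalExponent (m : σ → ℕ) (r k : ℕ) : yCoord σ (normalExponent m r k) = k := by
  have hsum : yCoord σ (normalExponent m r k) = (k % r : ℕ) + (k / r : ℕ) * r := by
    simp [normalExponent, yExp, zExp, -nsmul_eq_mul]
  exact hsum.trans (by exact_mod_cast mul_comm r (k / r) ▸ Nat.mod_add_div k r)

@[simp]
lemma xCoord_normalExponent (m : σ → ℕ) (r k : ℕ) (i : σ) :
    xCoord i (normalExponent m r k) = -(m i * (k / r : ℕ)) := by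
  simp [normalExponent, yExp, zExp, mul_comm, -nsmul_eq_mul]

lemma mem_exponentSemigroup_iff [Finite σ] {m : σ → ℕ} {r : ℕ} {s : Exponent σ} :
    s ∈ exponentSemigroup m r ↔ ∃ α k, s = monomialExponent α + normalExponent m r k := by
  constructor
  · rintro ⟨hy, hx⟩
    obtain ⟨k, hk⟩ := Int.eq_ofNat_of_zero_le hy
    simp only [hk, ← Int.natCast_div, neg_le_iff_add_nonneg] at hx
    choose α hα using fun i ↦ Int.eq_ofNat_of_zero_le (hx i)
    refine ⟨Finsupp.equivFunOnFinite.symm α, k, ?_⟩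
    ext i
    · simp [hk]
    · simp [← hα]
  · rintro ⟨α, k, rfl⟩
    exact ⟨by simp, fun i ↦ by simp⟩

end Monomial

section Weight

variable {m : σ → ℕ} {r : ℕ} {e s : Exponent σ}

lemma facet_nonneg (hr : r ≠ 0) (hs : s ∈ exponentSemigroup m r) (i : σ) :
    0 ≤ r * xCoord i s + m i * yCoord σ s := by
  have hdiv : m i * (r * (yCoord σ s / r)) ≤ m i * yCoord σ s :=
    mul_le_mul_of_nonneg_left (Int.mul_ediv_self_le (by exact_mod_cast hr)) (by positivity)
  linarith [mul_le_mul_of_nonneg_left (hs.2 i) (Int.natCast_nonneg r)]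

lemma facet_nonneg_of_add_mem (hr : 2 ≤ r) {i : σ} (hm : 2 ≤ m i)
    (hx : xExp i + e ∈ exponentSemigroup m r) (hy : yExp σ + e ∈ exponentSemigroup m r) :
    0 ≤ r * xCoord i e + m i * yCoord σ e := by
  have hr' : (2 : ℤ) ≤ r := by exact_mod_cast hr
  have hm' : (2 : ℤ) ≤ m i := by exact_mod_cast hm
  have hxi : -(m i * (yCoord σ e / r)) ≤ 1 + xCoord i e := by simpa [xExp] using hx.2 i
  have hyi : -(m i * ((1 + yCoord σ e) / r)) ≤ xCoord i e := by simpa [yExp] using hy.2 i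
  set q := yCoord σ e / r
  have hq : r * q ≤ yCoord σ e := Int.mul_ediv_self_le (by lia)
  have hq' : yCoord σ e < r * q + r := Int.lt_mul_ediv_self_add (by lia)
  obtain hlt | heq : 1 + yCoord σ e < r * q + r ∨ yCoord σ e = r * q + r - 1 := by lia
  · have hdiv : (1 + yCoord σ e) / r = q :=
      (Int.ediv_eq_iff_of_pos (by lia)).2 ⟨by linarith, by linarith⟩
    rw [hdiv] at hyi
    nlinarith [hr', hm']
  · rw [heq]
    nlinarith [hr', hm']

variable {M : Exponent σ →+ ℤ}

lemma add_nsmul_mem {S : Set (Exponent σ)} (hadd : ∀ s ∈ S, M s ≠ 0 → s + e ∈ S)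
    (he : M e = -1) (hs : s ∈ S) : ∀ k : ℕ, k ≤ M s → s + k • e ∈ S
  | 0, _ => by simpa using hs
  | k + 1, hk => by
    push_cast at hk
    have hM : M (s + k • e) ≠ 0 := by
      rw [map_add, map_nsmul, he, nsmul_eq_mul]
      lia
    rw [succ_nsmul, ← add_assoc]
    exact hadd _ (add_nsmul_mem hadd he hs k (by lia)) hM

lemma weight_relation [Fintype σ] (M : Exponent σ →+ ℤ) (m : σ → ℕ) (r : ℕ) (s : Exponent σ) :
    r * M s = yCoord σ s * M (zExp m r) +
      ∑ i, (r * xCoord i s + m i * yCoord σ s) * M (xExp i) := by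
  rw [← nsmul_eq_mul, ← map_nsmul, nsmul_exponent_eq_sum m]
  simp only [map_add, map_sum, map_zsmul, smul_eq_mul]

variable (hr : 2 ≤ r) (hM : ∀ s ∈ exponentSemigroup m r, 0 ≤ M s)
  (hadd : ∀ s ∈ exponentSemigroup m r, M s ≠ 0 → s + e ∈ exponentSemigroup m r) (he : M e = -1)
include hr hM

lemma weight_nonneg_of_facets [Finite σ] (hy : 0 ≤ yCoord σ s)
    (hx : ∀ i, 0 ≤ r * xCoord i s + m i * yCoord σ s) : 0 ≤ M s := by
  cases nonempty_fintype σ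
  have hz : 0 ≤ yCoord σ s * M (zExp m r) :=
    mul_nonneg hy (hM _ (zExp_mem_exponentSemigroup m (by lia)))
  have hsum : 0 ≤ ∑ i, (r * xCoord i s + m i * yCoord σ s) * M (xExp i) :=
    sum_nonneg fun i _ ↦ mul_nonneg (hx i) (hM _ (xExp_mem_exponentSemigroup m r i))
  have hrel := weight_relation M m r s
  exact nonneg_of_mul_nonneg_right (hrel ▸ add_nonneg hz hsum) (by lia)

lemma weight_yExp_pos [Finite σ] {i : σ} (hm : m i ≠ 0) (hi : 0 < M (xExp i)) :
    0 < M (yExp σ) := by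
  cases nonempty_fintype σ
  have hz := hM _ (zExp_mem_exponentSemigroup m (by lia))
  have hsum : m i * M (xExp i) ≤ ∑ j, m j * M (xExp j) :=
    single_le_sum (f := fun j ↦ m j * M (xExp j)) (fun j _ ↦ mul_nonneg (by positivity)
      (hM _ (xExp_mem_exponentSemigroup m r j))) (mem_univ i)
  have hmi : 0 < m i * M (xExp i) := by positivity
  have hrel : r * M (yExp σ) = M (zExp m r) + ∑ j, m j * M (xExp j) := by
    simpa [yExp] using weight_relation M m r (yExp σ)
  exact pos_of_mul_pos_right (show 0 < (r : ℤ) * M (yExp σ) by linarith) (by lia)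

include hadd he

lemma weight_xExp_eq_zero [Finite σ] (hm : ∀ i, 2 ≤ m i) (i : σ) : M (xExp i) = 0 := by
  by_contra hi
  have hxS := xExp_mem_exponentSemigroup m r
  have hpos : 0 < M (xExp i) := (hM _ (hxS i)).lt_of_ne' hi
  have hposy : 0 < M (yExp σ) := weight_yExp_pos hr hM (by have := hm i; lia) hpos
  obtain ⟨a, ha⟩ := Int.eq_ofNat_of_zero_le hpos.le
  have ha' : (0 : ℤ) < a := ha ▸ hpos
  have hmem : xExp i + a • e ∈ exponentSemigroup m r :=
    add_nsmul_mem hadd he (hxS i) a ha.ge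
  have hy : 0 ≤ yCoord σ e := by
    have : 0 ≤ a * yCoord σ e := by simpa [xExp, -nsmul_eq_mul] using hmem.1
    exact nonneg_of_mul_nonneg_right this ha'
  have hother (j : σ) (hj : j ≠ i) : 0 ≤ r * xCoord j e + m j * yCoord σ e := by
    have : 0 ≤ r * (a * xCoord j e) + m j * (a * yCoord σ e) := by
      simpa [xExp, hj, -nsmul_eq_mul] using facet_nonneg (by lia) hmem j
    exact nonneg_of_mul_nonneg_right (by linarith) ha'
  have hself : 0 ≤ r * xCoord i e + m i * yCoord σ e :=
    facet_nonneg_of_add_mem hr (hm i) (hadd _ (hxS i) hi)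
      (hadd _ (yExp_mem_exponentSemigroup m hr) hposy.ne')
  have hnonneg : 0 ≤ M e := weight_nonneg_of_facets hr hM hy fun j ↦ by
    obtain rfl | hj := eq_or_ne j i
    exacts [hself, hother j hj]
  lia

theorem weight_eq_yCoord [Finite σ] (hm : ∀ i, 2 ≤ m i) : M = yCoord σ := by
  cases nonempty_fintype σ
  have hMs (s : Exponent σ) : M s = yCoord σ s * M (yExp σ) := by
    conv_lhs => rw [exponent_eq_sum s]
    simp [weight_xExp_eq_zero hr hM hadd he hm, -zsmul_eq_mul]
  have hy : M (yExp σ) = 1 := by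
    have hnonneg := hM _ (yExp_mem_exponentSemigroup m hr)
    have hunit : -yCoord σ e * M (yExp σ) = 1 := by linarith [hMs e]
    have := Int.eq_one_or_neg_one_of_mul_eq_one' hunit
    lia
  ext s
  rw [hMs, hy, mul_one]

end Weight

end Exponent

/-! ### Normal forms -/

section NormalForm

variable {R B : Type*} [CommRing R] [CommRing B] [Algebra R B]

/-- The `R`-linear map sending `Y ^ k` to `y ^ (k % r) * z ^ (k / r)`. When `y` satisfies a
relation `p * z = y ^ r + ⋯`, its values are the normal forms modulo this relation. -/
noncomputable def normalForm (r : ℕ) (y z : B) : Polynomial R →ₗ[R] B :=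
  Polynomial.lsum fun k ↦ LinearMap.toSpanSingleton R B (y ^ (k % r) * z ^ (k / r))

lemma normalForm_apply (r : ℕ) (y z : B) (P : Polynomial R) :
    normalForm r y z P = P.sum fun k a ↦ a • (y ^ (k % r) * z ^ (k / r)) := rfl

lemma normalForm_monomial (r : ℕ) (y z : B) (k : ℕ) (a : R) :
    normalForm r y z (Polynomial.monomial k a) = a • (y ^ (k % r) * z ^ (k / r)) := by
  simp [normalForm_apply]

lemma smul_pow_mul_pow_mem_range_normalForm {r i : ℕ} (hi : i < r) (q : ℕ) (y z : B) (a : R) :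
    a • (y ^ i * z ^ q) ∈ LinearMap.range (normalForm r y z (R := R)) := by
  refine ⟨Polynomial.monomial (i + r * q) a, ?_⟩
  rw [normalForm_monomial, Nat.add_mul_mod_self_left, Nat.mod_eq_of_lt hi,
    Nat.add_mul_div_left _ _ (by lia), Nat.div_eq_of_lt hi, zero_add]

variable {y z : B} {p : R} {Q : Polynomial R}

lemma pow_natDegree_mul_pow_mem_range_normalForm (hQ : Q.Monic) (hdeg : 0 < Q.natDegree)
    (hrel : algebraMap R B p * z = Polynomial.aeval y Q) (q : ℕ) :
    y ^ Q.natDegree * z ^ q ∈ LinearMap.range (normalForm Q.natDegree y z (R := R)) := by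
  have hpow : y ^ Q.natDegree = p • z - ∑ i ∈ range Q.natDegree, Q.coeff i • y ^ i := by
    rw [Algebra.smul_def, hrel, Polynomial.aeval_eq_sum_range, sum_range_succ,
      hQ.coeff_natDegree, one_smul, add_sub_cancel_left]
  rw [hpow, sub_mul, sum_mul, smul_mul_assoc, ← pow_succ']
  refine sub_mem ?_ (sum_mem fun i hi ↦ ?_)
  · simpa using smul_pow_mul_pow_mem_range_normalForm hdeg (q + 1) y z p
  · rw [smul_mul_assoc]
    exact smul_pow_mul_pow_mem_range_normalForm (mem_range.1 hi) q y z _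

theorem normalForm_surjective (hQ : Q.Monic) (hdeg : 0 < Q.natDegree)
    (hrel : algebraMap R B p * z = Polynomial.aeval y Q) (hgen : Algebra.adjoin R {y, z} = ⊤) :
    Function.Surjective (normalForm Q.natDegree y z (R := R)) := by
  set N := LinearMap.range (normalForm Q.natDegree y z (R := R))
  have mem_of_basis {c : B} (h : ∀ i < Q.natDegree, ∀ q, y ^ i * z ^ q * c ∈ N) :
      ∀ b ∈ N, b * c ∈ N := by
    rintro _ ⟨P, rfl⟩
    rw [normalForm_apply, Polynomial.sum_def, sum_mul]
    exact sum_mem fun k _ ↦ smul_mul_assoc (P.coeff k) _ c ▸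
      N.smul_mem _ (h _ (Nat.mod_lt k hdeg) _)
  have hmul (c : B) (hc : c ∈ Algebra.adjoin R {y, z}) : ∀ b ∈ N, b * c ∈ N := by
    induction hc using Algebra.adjoin_induction with
    | mem c hc =>
      refine mem_of_basis fun i hi q ↦ ?_
      obtain rfl | rfl := hc
      · rw [mul_right_comm, ← pow_succ]
        obtain hi' | hi' := (Nat.succ_le_of_lt hi).lt_or_eq
        · simpa only [one_smul] using smul_pow_mul_pow_mem_range_normalForm hi' q c z (1 : R)
        · rw [show i + 1 = Q.natDegree from hi']
          exact pow_natDegree_mul_pow_mem_range_normalForm hQ hdeg hrel q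
      · rw [mul_assoc, ← pow_succ]
        simpa only [one_smul] using
          smul_pow_mul_pow_mem_range_normalForm hi (q + 1) y c (1 : R)
    | algebraMap a =>
      intro b hb
      rw [← Algebra.commutes, ← Algebra.smul_def]
      exact N.smul_mem a hb
    | add c d _ _ hc hd => exact fun b hb ↦ mul_add b c d ▸ add_mem (hc b hb) (hd b hb)
    | mul c d _ _ hc hd => exact fun b hb ↦ mul_assoc b c d ▸ hd _ (hc b hb)
  intro b
  have hone : (1 : B) ∈ N := by
    simpa only [one_smul, pow_zero, one_mul] using
      smul_pow_mul_pow_mem_range_normalForm hdeg 0 y z (1 : R)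
  simpa only [one_mul, N, LinearMap.mem_range] using hmul b (hgen ▸ Algebra.mem_top) 1 hone

lemma normalForm_eq_aeval {r : ℕ} {P : Polynomial R} (hP : P.natDegree < r) (y z : B) :
    normalForm r y z P = Polynomial.aeval y P := by
  rw [normalForm_apply, Polynomial.aeval_eq_sum_range, Polynomial.sum_over_range _ (by simp)]
  refine sum_congr rfl fun k hk ↦ ?_
  have hk' : k < r := by
    have := mem_range.1 hk
    lia
  rw [Nat.mod_eq_of_lt hk', Nat.div_eq_of_lt hk', pow_zero, mul_one]

end NormalForm

/-! ### Laurent expansions -/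

section Laurent

variable {K σ : Type*} [CommRing K]

variable (K σ) in
/-- The inclusion of `K[x]` into the Laurent polynomials in `x` and `y`. -/
noncomputable def laurent : MvPolynomial σ K →ₐ[K] K[Exponent σ] :=
  AddMonoidAlgebra.mapDomainAlgHom K K monomialExponent

lemma laurent_monomial (α : σ →₀ ℕ) (a : K) :
    laurent K σ (monomial α a) = single (monomialExponent α) a :=
  AddMonoidAlgebra.mapDomain_single

lemma laurent_X (i : σ) : laurent K σ (X i) = single (xExp i) 1 := by
  rw [X, laurent_monomial, monomialExponent_single]

lemma yCoord_mono [LinearOrder σ] [WellFoundedLT σ] : Monotone (yCoord σ) := fun _ _ h ↦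
  Prod.Lex.monotone_fst_ofLex h

variable [Finite σ] [LinearOrder σ]

lemma exists_isLeadingExponent_laurent {p : MvPolynomial σ K} (hp : p ≠ 0) :
    ∃ α, IsLeadingExponent (laurent K σ p) (monomialExponent α) := by
  have hp' : laurent K σ p ≠ 0 :=
    (map_ne_zero_iff _ (AddMonoidAlgebra.mapDomain_injective monomialExponent_injective)).2 hp
  obtain ⟨s, hs⟩ := exists_isLeadingExponent hp'
  obtain ⟨α, rfl⟩ : s ∈ Set.range monomialExponent :=
    by_contra fun h ↦ hs.2 (Finsupp.mapDomain_of_notMem_range _ _ h)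
  exact ⟨α, hs⟩

lemma isLeadingExponent_sum_laurent_mul [IsDomain K] {u : ℕ → K[Exponent σ]}
    {s : ℕ → Exponent σ} (hu : ∀ k, IsLeadingExponent (u k) (s k)) (hs : ∀ k, yCoord σ (s k) = k)
    {P : Polynomial (MvPolynomial σ K)} {α : σ →₀ ℕ}
    (hα : IsLeadingExponent (laurent K σ P.leadingCoeff) (monomialExponent α)) :
    IsLeadingExponent (P.sum fun k a ↦ laurent K σ a * u k)
      (monomialExponent α + s P.natDegree) := by
  have hP : P ≠ 0 := by
    rintro rfl
    simpa using hα.ne_zero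
  refine isLeadingExponent_sum (Polynomial.natDegree_mem_support_of_nonzero hP)
    (hα.mul (hu _)) fun k hk hkP ↦ ?_
  obtain ⟨β, hβ⟩ := exists_isLeadingExponent_laurent (Polynomial.mem_support_iff.1 hk)
  refine ⟨monomialExponent β + s k, ?_, (hβ.mul (hu k)).1⟩
  have hlt : k < P.natDegree := (Polynomial.le_natDegree_of_mem_supp k hk).lt_of_ne hkP
  exact yCoord_mono.reflect_lt (by simpa [hs] using hlt)

end Laurent

/-! ### Derivations of a Laurent model -/

section Intertwiner

variable {K B L : Type*} [CommRing K] [CommRing B] [CommRing L] [Algebra K B] [Algebra K L]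

/-- The subalgebra on which the derivations `D` and `Δ` are intertwined by `F`. -/
def intertwiner (F : B →ₐ[K] L) (D : Derivation K B B) (Δ : Derivation K L L) :
    Subalgebra K B where
  carrier := {b | F (D b) = Δ (F b)}
  mul_mem' {a b} ha hb := by
    simp only [Set.mem_ofPred_eq, Derivation.leibniz, map_add, map_mul, smul_eq_mul] at ha hb ⊢
    rw [ha, hb]
  add_mem' {a b} ha hb := by
    simp only [Set.mem_ofPred_eq, map_add] at ha hb ⊢
    rw [ha, hb]
  algebraMap_mem' a := by
    simp only [Set.mem_ofPred_eq, AlgHom.commutes, Derivation.map_algebraMap, map_zero]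

lemma mem_intertwiner {F : B →ₐ[K] L} {D : Derivation K B B} {Δ : Derivation K L L} {b : B} :
    b ∈ intertwiner F D Δ ↔ F (D b) = Δ (F b) := Iff.rfl

lemma mem_intertwiner_of_mul_mem {F : B →ₐ[K] L} {D : Derivation K B B} {Δ : Derivation K L L}
    {a b : B} (hunit : IsUnit (F a)) (ha : a ∈ intertwiner F D Δ)
    (hab : a * b ∈ intertwiner F D Δ) : b ∈ intertwiner F D Δ := by
  simp only [mem_intertwiner, Derivation.leibniz, map_add, map_mul, smul_eq_mul] at ha hab ⊢
  rw [ha] at hab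
  exact hunit.mul_left_cancel (add_right_cancel hab)

end Intertwiner

section Model

variable {K σ B : Type*} [CommRing K] [Fintype σ] [CommRing B] [Algebra K B]
  [Algebra (MvPolynomial σ K) B]

/-- `F` expresses the elements of `B`, generated over `K[x]` by `y` and `z` with
`x ^ m * z = Q(x, y)`, as Laurent polynomials in `x` and `y`. -/
structure IsLaurentModel (m : σ → ℕ) (Q : Polynomial (MvPolynomial σ K)) (y z : B)
    (F : B →ₐ[K] K[Exponent σ]) : Prop where
  relation : algebraMap (MvPolynomial σ K) B (∏ i, X i ^ m i) * z = Polynomial.aeval y Q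
  adjoin_eq_top : Algebra.adjoin (MvPolynomial σ K) {y, z} = ⊤
  map_algebraMap (p : MvPolynomial σ K) : F (algebraMap _ B p) = laurent K σ p
  map_y : F y = single (yExp σ) 1

lemma laurent_prod_X_pow (m : σ → ℕ) :
    laurent K σ (∏ i, X i ^ m i) = single (∑ i, m i • xExp i) 1 := by
  simp only [map_prod, map_pow, laurent_X, AddMonoidAlgebra.single_pow, one_pow,
    AddMonoidAlgebra.prod_single, prod_const_one]

lemma isUnit_single_one {G : Type*} [AddCommGroup G] (v : G) :
    IsUnit (single v 1 : K[G]) := by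
  refine .of_mul_eq_one (single (-v) 1) ?_
  rw [single_mul_single, add_neg_cancel, mul_one, AddMonoidAlgebra.one_def]

lemma sum_nsmul_xExp_add_zExp (m : σ → ℕ) (r : ℕ) :
    ∑ i, m i • xExp i + zExp m r = r • yExp σ := by
  classical
  ext <;> simp [zExp, yExp, xExp, Pi.single_apply, -nsmul_eq_mul]

variable {m : σ → ℕ} {Q : Polynomial (MvPolynomial σ K)} {y z : B} {F : B →ₐ[K] K[Exponent σ]}

namespace IsLaurentModel

section Leading

variable [IsDomain K] [LinearOrder σ] (H : IsLaurentModel m Q y z F)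
include H

lemma isLeadingExponent_y : IsLeadingExponent (F y) (yExp σ) :=
  H.map_y ▸ isLeadingExponent_single _ one_ne_zero

lemma isLeadingExponent_z (hQ : Q.Monic) : IsLeadingExponent (F z) (zExp m Q.natDegree) := by
  have hpow (k : ℕ) : IsLeadingExponent (F y ^ k) (k • yExp σ) := H.isLeadingExponent_y.pow k
  have haeval : F (Polynomial.aeval y Q) = Q.sum fun k a ↦ laurent K σ a * F y ^ k := by
    simp only [Polynomial.aeval_def, Polynomial.eval₂_eq_sum, Polynomial.sum_def, map_sum, map_mul,
      map_pow, H.map_algebraMap]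
  have hlead : IsLeadingExponent (laurent K σ Q.leadingCoeff) (monomialExponent 0) := by
    rw [hQ.leadingCoeff, map_one, map_zero]
    exact isLeadingExponent_single 0 one_ne_zero
  have hprod : IsLeadingExponent (single (∑ i, m i • xExp i) 1 * F z)
      (Q.natDegree • yExp σ) := by
    rw [← laurent_prod_X_pow, ← H.map_algebraMap, ← map_mul, H.relation, haeval]
    simpa using isLeadingExponent_sum_laurent_mul hpow (by simp [yExp, -nsmul_eq_mul]) hlead
  obtain ⟨t, ht⟩ := exists_isLeadingExponent (right_ne_zero_of_mul hprod.ne_zero)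
  have heq := ((isLeadingExponent_single _ one_ne_zero).mul ht).unique hprod
  rw [← sum_nsmul_xExp_add_zExp m] at heq
  exact add_left_cancel heq ▸ ht

lemma isLeadingExponent_pow_mul_pow (hQ : Q.Monic) (k : ℕ) :
    IsLeadingExponent (F (y ^ (k % Q.natDegree) * z ^ (k / Q.natDegree)))
      (normalExponent m Q.natDegree k) := by
  rw [map_mul, map_pow, map_pow]
  exact (H.isLeadingExponent_y.pow _).mul ((H.isLeadingExponent_z hQ).pow _)

lemma exists_normalForm_eq (hQ : Q.Monic) (hdeg : 0 < Q.natDegree) {b : B} (hb : b ≠ 0) :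
    ∃ (P : Polynomial (MvPolynomial σ K)) (α : σ →₀ ℕ), normalForm Q.natDegree y z P = b ∧
      IsLeadingExponent (F b) (monomialExponent α + normalExponent m Q.natDegree P.natDegree) := by
  obtain ⟨P, rfl⟩ := normalForm_surjective hQ hdeg H.relation H.adjoin_eq_top b
  have hP : P ≠ 0 := by
    rintro rfl
    exact hb (map_zero _)
  obtain ⟨α, hα⟩ := exists_isLeadingExponent_laurent (Polynomial.leadingCoeff_ne_zero.2 hP)
  have hF : F (normalForm Q.natDegree y z P) = P.sum fun k a ↦
      laurent K σ a * F (y ^ (k % Q.natDegree) * z ^ (k / Q.natDegree)) := by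
    rw [normalForm_apply, Polynomial.sum_def, Polynomial.sum_def, map_sum]
    exact sum_congr rfl fun k _ ↦ by rw [Algebra.smul_def, map_mul, H.map_algebraMap]
  refine ⟨P, α, rfl, ?_⟩
  rw [hF]
  exact isLeadingExponent_sum_laurent_mul (H.isLeadingExponent_pow_mul_pow hQ)
    (yCoord_normalExponent m _) hα

lemma injective (hQ : Q.Monic) (hdeg : 0 < Q.natDegree) : Function.Injective F := by
  refine (injective_iff_map_eq_zero F).2 fun b hb ↦ by_contra fun hne ↦ ?_
  obtain ⟨_, _, -, hlead⟩ := H.exists_normalForm_eq hQ hdeg hne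
  exact hlead.ne_zero hb

lemma leadingExponents_range (hQ : Q.Monic) (hdeg : 0 < Q.natDegree) :
    leadingExponents (Set.range F) = exponentSemigroup m Q.natDegree := by
  ext s
  rw [mem_exponentSemigroup_iff]
  constructor
  · rintro ⟨_, ⟨b, rfl⟩, hs⟩
    have hb : b ≠ 0 := by
      rintro rfl
      exact hs.ne_zero (map_zero F)
    obtain ⟨P, α, -, hlead⟩ := H.exists_normalForm_eq hQ hdeg hb
    exact ⟨α, P.natDegree, hs.unique hlead⟩
  · rintro ⟨α, k, rfl⟩
    refine ⟨_, ⟨algebraMap (MvPolynomial σ K) B (monomial α 1) *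
      (y ^ (k % Q.natDegree) * z ^ (k / Q.natDegree)), rfl⟩, ?_⟩
    rw [map_mul, H.map_algebraMap, laurent_monomial]
    exact (isLeadingExponent_single _ one_ne_zero).mul (H.isLeadingExponent_pow_mul_pow hQ k)

end Leading

variable [IsScalarTower K (MvPolynomial σ K) B] (H : IsLaurentModel m Q y z F)
include H

lemma eq_top_of_mem {S : Subalgebra K B} (hx : ∀ i, algebraMap (MvPolynomial σ K) B (X i) ∈ S)
    (hy : y ∈ S)
    (hdiv : ∀ b, algebraMap (MvPolynomial σ K) B (∏ i, X i ^ m i) * b ∈ S → b ∈ S) : S = ⊤ := by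
  have hR (p : MvPolynomial σ K) : algebraMap _ B p ∈ S := by
    induction p using MvPolynomial.induction_on with
    | C a =>
      rw [← algebraMap_eq, ← IsScalarTower.algebraMap_apply]
      exact S.algebraMap_mem a
    | add p q hp hq => exact map_add (algebraMap _ B) p q ▸ add_mem hp hq
    | mul_X p i hp => exact map_mul (algebraMap _ B) p (X i) ▸ mul_mem hp (hx i)
  have hz : z ∈ S := hdiv z <| by
    rw [H.relation, Polynomial.aeval_eq_sum_range]
    refine sum_mem fun k _ ↦ ?_
    rw [Algebra.smul_def]
    exact mul_mem (hR _) (pow_mem hy k)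
  refine eq_top_iff.2 fun b _ ↦ ?_
  have hb : b ∈ Algebra.adjoin (MvPolynomial σ K) {y, z} := H.adjoin_eq_top ▸ Algebra.mem_top
  induction hb using Algebra.adjoin_induction with
  | mem c hc => obtain rfl | rfl := hc <;> assumption
  | algebraMap p => exact hR p
  | add _ _ _ _ ha hb => exact add_mem (ha trivial) (hb trivial)
  | mul _ _ _ _ ha hb => exact mul_mem (ha trivial) (hb trivial)

theorem exists_logDerivation (D : Derivation K B B) :
    ∃ w, ∀ b, F (D b) = logDerivation w (F b) := by
  obtain ⟨w, hwy, hwx⟩ := exists_addMonoidHom_apply (single (-yExp σ) 1 * F (D y))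
    fun i ↦ single (-xExp i) 1 * F (D (algebraMap (MvPolynomial σ K) B (X i)))
  have hmem {b : B} {v : Exponent σ} (hb : F b = single v 1)
      (hv : w v = single (-v) 1 * F (D b)) : b ∈ intertwiner F D (logDerivation w) := by
    rw [mem_intertwiner, hb, logDerivation_single, hv, ← mul_assoc, single_mul_single,
      add_neg_cancel, mul_one, ← AddMonoidAlgebra.one_def, one_mul]
  have hx (i : σ) := hmem ((H.map_algebraMap (X i)).trans (laurent_X i)) (hwx i)
  have htop : intertwiner F D (logDerivation w) = ⊤ := by
    refine H.eq_top_of_mem hx (hmem H.map_y hwy) fun b hb ↦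
      mem_intertwiner_of_mul_mem ?_ ?_ hb
    · exact H.map_algebraMap _ ▸ laurent_prod_X_pow (K := K) m ▸ isUnit_single_one _
    · simp only [map_prod, map_pow]
      exact prod_mem fun i _ ↦ pow_mem (hx i) _
  exact ⟨w, fun b ↦ mem_intertwiner.1 (htop ▸ Algebra.mem_top)⟩

theorem mem_adjoin_of_apply_apply_eq_zero [IsDomain K] [CharZero K] [LinearOrder σ] (hQ : Q.Monic)
    (hdeg : 2 ≤ Q.natDegree) (hm : ∀ i, 2 ≤ m i) {D : Derivation K B B} (hD : D ≠ 0)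
    (hnil : ∀ b, ∃ k, D^[k] b = 0) {b : B} (hb : D (D b) = 0) :
    b ∈ Algebra.adjoin (MvPolynomial σ K) {y} := by
  obtain rfl | hne := eq_or_ne b 0
  · exact zero_mem _
  obtain ⟨w, hw⟩ := H.exists_logDerivation D
  have hiter (k : ℕ) (c : B) : F (D^[k] c) = (logDerivation w)^[k] (F c) :=
    (Function.Semiconj.iterate_right (f := F) hw k) c
  have hw0 : w ≠ 0 := by
    rintro rfl
    refine hD (Derivation.ext fun c ↦ H.injective hQ (by lia) ?_)
    simp [hw, logDerivation_apply]
  have hrange := H.leadingExponents_range hQ (by lia)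
  obtain ⟨e, M, he, hadd, hM⟩ := exists_nilpotency_weight hw0 (A := Set.range F)
    (by rintro _ ⟨c, rfl⟩; exact ⟨D c, hw c⟩)
    (by rintro _ ⟨c, rfl⟩; obtain ⟨k, hk⟩ := hnil c; exact ⟨k, by rw [← hiter, hk, map_zero]⟩)
    (hrange ▸ closure_exponentSemigroup m hdeg)
  rw [hrange] at hadd
  have hnonneg : ∀ s ∈ exponentSemigroup m Q.natDegree, 0 ≤ M s := by
    rw [← hrange]
    rintro s ⟨_, ⟨c, rfl⟩, hs⟩
    obtain ⟨k, hk⟩ := hnil c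
    obtain ⟨i, -, hi⟩ := hM _ s k hs (by rw [← hiter, hk, map_zero])
    exact hi ▸ Int.natCast_nonneg i
  obtain rfl : M = yCoord σ := weight_eq_yCoord hdeg hnonneg hadd he hm
  obtain ⟨P, α, rfl, hlead⟩ := H.exists_normalForm_eq hQ (by lia) hne
  obtain ⟨i, hi, hPi⟩ := hM _ _ 2 hlead (by rw [← hiter]; simp [hb])
  have hPdeg : P.natDegree < Q.natDegree := by
    simp only [map_add, yCoord_monomialExponent, yCoord_normalExponent, zero_add,
      Nat.cast_inj] at hPi
    lia
  rw [normalForm_eq_aeval hPdeg]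
  exact Polynomial.aeval_mem_adjoin_singleton _ _

end IsLaurentModel

end Model

/-! ### The coordinate ring of `x ^ m * z = Q(x, y)` -/

section CoordRing

variable {K σ : Type*} [CommRing K] [Fintype σ] (m : σ → ℕ) (Q : Polynomial (MvPolynomial σ K))

/-- The polynomial `x ^ m * z - Q(x, y)`, the variables `x i`, `y` and `z` being indexed by
`Sum.inl i`, `Sum.inr 0` and `Sum.inr 1`. -/
noncomputable def equation : MvPolynomial (σ ⊕ Fin 2) K :=
  (∏ i, X (Sum.inl i) ^ m i) * X (Sum.inr 1) -
    Polynomial.eval₂ (rename Sum.inl).toRingHom (X (Sum.inr 0)) Q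

/-- The coordinate ring of the hypersurface `x ^ m * z = Q(x, y)`. -/
abbrev CoordRing : Type _ := MvPolynomial (σ ⊕ Fin 2) K ⧸ Ideal.span {equation m Q}

/-- The quotient map onto the coordinate ring. -/
noncomputable abbrev CoordRing.mk : MvPolynomial (σ ⊕ Fin 2) K →+* CoordRing m Q :=
  Ideal.Quotient.mk (Ideal.span {equation m Q})

noncomputable instance : Algebra (MvPolynomial σ K) (CoordRing m Q) :=
  ((Ideal.Quotient.mkₐ K (Ideal.span {equation m Q})).comp (rename Sum.inl)).toAlgebra

instance : IsScalarTower K (MvPolynomial σ K) (CoordRing m Q) :=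
  .of_algebraMap_eq fun a ↦ (AlgHom.commutes
    ((Ideal.Quotient.mkₐ K (Ideal.span {equation m Q})).comp (rename Sum.inl)) a).symm

lemma algebraMap_coordRing (p : MvPolynomial σ K) :
    algebraMap _ (CoordRing m Q) p = CoordRing.mk m Q (rename Sum.inl p) := rfl

/-- The images of the variables under the Laurent expansion, in which
`z = x ^ (-m) * Q(x, y)`. -/
noncomputable def laurentCoord : σ ⊕ Fin 2 → K[Exponent σ] :=
  Sum.elim (fun i ↦ single (xExp i) 1) ![single (yExp σ) 1,
    single (-∑ i, m i • xExp i) 1 *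
      Polynomial.eval₂ (laurent K σ).toRingHom (single (yExp σ) 1) Q]

lemma aeval_laurentCoord_rename (p : MvPolynomial σ K) :
    aeval (laurentCoord m Q) (rename Sum.inl p) = laurent K σ p := by
  rw [aeval_rename]
  refine DFunLike.congr_fun (algHom_ext fun i ↦ ?_) p
  simp [laurentCoord, laurent_X]

lemma aeval_laurentCoord_equation : aeval (laurentCoord m Q) (equation m Q) = 0 := by
  have hQ : aeval (laurentCoord m Q)
      (Polynomial.eval₂ (rename Sum.inl).toRingHom (X (Sum.inr 0)) Q) =
        Polynomial.eval₂ (laurent K σ).toRingHom (single (yExp σ) 1) Q := by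
    refine (Polynomial.hom_eval₂ Q _ (aeval (laurentCoord m Q)).toRingHom _).trans ?_
    congr 1
    · exact RingHom.ext (aeval_laurentCoord_rename m Q)
    · simp [laurentCoord]
  have hx : aeval (R := K) (laurentCoord m Q) (∏ i, X (Sum.inl i) ^ m i) =
      single (∑ i, m i • xExp i) 1 := by
    rw [← laurent_prod_X_pow, ← aeval_laurentCoord_rename m Q]
    simp
  have hz : aeval (R := K) (laurentCoord m Q) (X (Sum.inr 1)) = single (-∑ i, m i • xExp i) 1 *
      Polynomial.eval₂ (laurent K σ).toRingHom (single (yExp σ) 1) Q := by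
    simp [laurentCoord]
  rw [equation, map_sub, map_mul, hQ, hx, hz, ← mul_assoc, single_mul_single, add_neg_cancel,
    mul_one, ← AddMonoidAlgebra.one_def, one_mul, sub_self]

/-- The Laurent expansion of the elements of the coordinate ring. -/
noncomputable def laurentExpansion : CoordRing m Q →ₐ[K] K[Exponent σ] :=
  Ideal.Quotient.liftₐ (Ideal.span {equation m Q}) (aeval (R := K) (laurentCoord m Q)) fun a ha ↦ by
    obtain ⟨c, rfl⟩ := Ideal.mem_span_singleton'.1 ha
    rw [map_mul, aeval_laurentCoord_equation, mul_zero]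

lemma laurentExpansion_mk (p : MvPolynomial (σ ⊕ Fin 2) K) :
    laurentExpansion m Q (CoordRing.mk m Q p) = aeval (laurentCoord m Q) p := rfl

lemma coordRing_relation :
    algebraMap (MvPolynomial σ K) (CoordRing m Q) (∏ i, X i ^ m i) *
      CoordRing.mk m Q (X (Sum.inr 1)) =
        Polynomial.aeval (CoordRing.mk m Q (X (Sum.inr 0))) Q := by
  have heq : CoordRing.mk m Q ((∏ i, X (Sum.inl i) ^ m i) * X (Sum.inr 1)) =
      CoordRing.mk m Q (Polynomial.eval₂ (rename Sum.inl).toRingHom (X (Sum.inr 0)) Q) :=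
    Ideal.Quotient.eq.2 (Ideal.mem_span_singleton_self _)
  rw [map_mul, Polynomial.hom_eval₂] at heq
  have hprod : algebraMap (MvPolynomial σ K) (CoordRing m Q) (∏ i, X i ^ m i) =
      CoordRing.mk m Q (∏ i, X (Sum.inl i) ^ m i) := by
    simp only [algebraMap_coordRing, map_prod, map_pow, rename_X]
  rw [hprod]
  exact heq

lemma adjoin_coordRing :
    Algebra.adjoin (MvPolynomial σ K) {CoordRing.mk m Q (X (Sum.inr 0)),
      CoordRing.mk m Q (X (Sum.inr 1))} = ⊤ := by
  refine eq_top_iff.2 fun b _ ↦ ?_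
  obtain ⟨p, rfl⟩ := Ideal.Quotient.mk_surjective b
  induction p using MvPolynomial.induction_on with
  | C a =>
    have hC : CoordRing.mk m Q (C a) = algebraMap (MvPolynomial σ K) (CoordRing m Q) (C a) := by
      rw [algebraMap_coordRing, rename_C]
    exact hC ▸ Subalgebra.algebraMap_mem _ _
  | add p q hp hq => exact map_add (CoordRing.mk m Q) p q ▸ add_mem (hp trivial) (hq trivial)
  | mul_X p i hp =>
    rw [map_mul]
    refine mul_mem (hp trivial) ?_
    obtain i | i := i
    · rw [← rename_X (R := K) Sum.inl i, ← algebraMap_coordRing]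
      exact Subalgebra.algebraMap_mem _ _
    · fin_cases i
      exacts [Algebra.subset_adjoin (.inl rfl), Algebra.subset_adjoin (.inr rfl)]

theorem isLaurentModel_laurentExpansion :
    IsLaurentModel m Q (CoordRing.mk m Q (X (Sum.inr 0))) (CoordRing.mk m Q (X (Sum.inr 1)))
      (laurentExpansion m Q) where
  relation := coordRing_relation m Q
  adjoin_eq_top := adjoin_coordRing m Q
  map_algebraMap := aeval_laurentCoord_rename m Q
  map_y := by simp [laurentExpansion_mk, laurentCoord]

lemma adjoin_subset_range :
    (Algebra.adjoin (MvPolynomial σ K)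
      {CoordRing.mk m Q (X (Sum.inr 0))} : Set (CoordRing m Q)) ⊆
    RingHom.range ((CoordRing.mk m Q).comp
      (rename (Sum.elim Sum.inl fun _ : Fin 1 ↦ Sum.inr 0)).toRingHom) := by
  intro b hb
  induction hb using Algebra.adjoin_induction with
  | mem b hb =>
    obtain rfl := hb
    exact ⟨X (Sum.inr 0), by simp⟩
  | algebraMap p => exact ⟨rename Sum.inl p, by simp [rename_rename, algebraMap_coordRing]⟩
  | add _ _ _ _ ha hb => exact add_mem ha hb
  | mul _ _ _ _ ha hb => exact mul_mem ha hb

end CoordRing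

end Danielewski

open Danielewski in
theorem stmt15_general {K σ : Type*} [CommRing K] [IsDomain K] [CharZero K] [Fintype σ]
    (m : σ → ℕ) (hm : ∀ i, 2 ≤ m i) (Q : Polynomial (MvPolynomial σ K)) (hQ : Q.Monic)
    (hdeg : 2 ≤ Q.natDegree) (D : Derivation K (CoordRing m Q) (CoordRing m Q)) (hD : D ≠ 0)
    (hln : ∀ b, ∃ k : ℕ, (⇑D)^[k] b = 0) (b : CoordRing m Q) (hb : D (D b) = 0) :
    b ∈ RingHom.range ((CoordRing.mk m Q).comp
      (rename (Sum.elim Sum.inl fun _ : Fin 1 ↦ Sum.inr 0)).toRingHom) := by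
  let _ : LinearOrder σ := IsWellOrder.linearOrder WellOrderingRel
  have hmodel := isLaurentModel_laurentExpansion m Q
  exact adjoin_subset_range m Q (hmodel.mem_adjoin_of_apply_apply_eq_zero hQ hdeg hm hD hln hb)

/-- On `B = ℂ[x₁,…,xₙ,y,z]/(x^{[m]}z − Q(x,y))` with `Q` monic in
`y` of degree `r ≥ 2` and all `mᵢ ≥ 2`, for every nonzero locally nilpotent
`ℂ`-derivation `D`, `Ker(D²)` is contained in the image of `ℂ[x₁,…,xₙ,y]`. -/
theorem stmt15 (n r : ℕ) (hr : 2 ≤ r) (m : Fin n → ℕ) (hm : ∀ i, 2 ≤ m i)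
    (Q : Polynomial (MvPolynomial (Fin n) ℂ)) (hQ : Q.Monic) (hdeg : Q.natDegree = r)
    (ι : MvPolynomial (Fin n) ℂ →+* MvPolynomial (Fin n ⊕ Fin 2) ℂ)
    (hι : ι = (MvPolynomial.rename (Sum.inl : Fin n → Fin n ⊕ Fin 2)).toRingHom)
    (j : MvPolynomial (Fin n ⊕ Fin 1) ℂ →+* MvPolynomial (Fin n ⊕ Fin 2) ℂ)
    (hj : j = (MvPolynomial.rename
      (Sum.elim Sum.inl (fun _ : Fin 1 => Sum.inr 0) :
        Fin n ⊕ Fin 1 → Fin n ⊕ Fin 2)).toRingHom)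
    (y z xm : MvPolynomial (Fin n ⊕ Fin 2) ℂ)
    (hy : y = MvPolynomial.X (Sum.inr 0)) (hz : z = MvPolynomial.X (Sum.inr 1))
    (hxm : xm = ∏ i, MvPolynomial.X (Sum.inl i) ^ m i)
    (I : Ideal (MvPolynomial (Fin n ⊕ Fin 2) ℂ))
    (hI : I = Ideal.span {xm * z - Polynomial.eval₂ ι y Q})
    (D : Derivation ℂ
      (MvPolynomial (Fin n ⊕ Fin 2) ℂ ⧸ I) (MvPolynomial (Fin n ⊕ Fin 2) ℂ ⧸ I))
    (hD : D ≠ 0) (hln : ∀ b, ∃ k : ℕ, (⇑D)^[k] b = 0) :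
    ∀ b, D (D b) = 0 → b ∈ RingHom.range ((Ideal.Quotient.mk I).comp j) := by
  subst hdeg hι hj hy hz hxm hI
  exact stmt15_general m hm Q hQ hr D hD hln
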